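/- Let k be a field, d an even integer with d ≥ 4, and m an integer with d+1 < m; set a = (d+2)/2. In R = k[x_1,…,x_m,z] let I = I_{a,1,m−1} + I_{a,2,m} and J = I_{a−1,2,m−1} + z·I_{a−2,3,m−2}, and let J̄ denote the image of J in R/I, an ideal of R/I regarded as an R/I-module. Then the R/I-linear map Θ : R/I → Hom_{R/I}(J̄, R/I) sending r to the multiplication-by-r map is injective, and its cokernel is isomorphic as an R/I-module to R/J. -/

import Mathlib

/-- The variable `x_t` (1-indexed, for `1 ≤ t ≤ n`) of the polynomial ring
`k[x_1, …, x_n]`, realized as `MvPolynomial (Fin n) k`. -/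
noncomputable def Xv (k : Type*) [Field k] (n t : ℕ) : MvPolynomial (Fin n) k :=
  if h : 1 ≤ t ∧ t ≤ n then MvPolynomial.X ⟨t - 1, by omega⟩ else 0

/-- The ideal `I_{a,p,q}` of `k[x_1, …, x_n]`, generated by the squarefree monomials
`x_{t_1} ⋯ x_{t_a}` with `p ≤ t_1 < t_2 < ⋯ < t_a ≤ q` and `t_{j+1} ≥ t_j + 2`. -/
noncomputable def idealI (k : Type*) [Field k] (n a p q : ℕ) :
    Ideal (MvPolynomial (Fin n) k) :=
  Ideal.span { f | ∃ t : ℕ → ℕ, p ≤ t 0 ∧ t (a - 1) ≤ q ∧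
    (∀ j, j + 1 < a → t j + 2 ≤ t (j + 1)) ∧
    f = ∏ j ∈ Finset.range a, Xv k n (t j) }

set_option synthInstance.maxHeartbeats 1000000
set_option maxHeartbeats 1000000

/-!
Write `I_{n,p,q}` for the ideal of sparse squarefree monomials, and put `A = I_{a-1,2,m-1}`,
`B = I_{a-2,3,m-2}`, `y = x_1 x_m`, so that `J = A + zB` and `I + yB = I_{a,1,m}`.

As in Gale's evenness condition, `I_{n+1,p,r+1}` is the Stanley–Reisner ideal of the complex on
`[p, r + 1]` whose facets are the unions of `n` disjoint pairs `{x, x + 1}`. An endomorphism of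
`I_{n,p+1,r}` modulo `I_{n+1,p,r+1}` is, on every facet, multiplication by an element of the
fraction field of a polynomial ring preserving a nonzero ideal, hence by a polynomial. Facets
containing a given face are connected through facets that share a generator of `I_{n,p+1,r}`, so
these polynomials glue and the endomorphism is a homothety. This applies to `A` modulo `I + yB` and
to `B` modulo `A`.

In `R/I` one has `y(A ∩ B) = 0`, so `φ : a + zb ↦ yb` is a well-defined map `J̄ → R/I`
(Kustin–Miller unprojection). The first homothety statement determines a homomorphism on `A` up to
a multiple of the inclusion; after subtracting it, the second one shows that what remains is a
multiple of `φ`. Finally `sφ` is a multiple of the inclusion exactly when `s ∈ J`, because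
`(a + zb)φ` is multiplication by `yb`.
-/

/-- The `R/K`-module `(A + K)/K` is faithful and its only endomorphisms are the homotheties, i.e.
`R/K → End ((A + K)/K)` is bijective. Endomorphisms are encoded as `R`-linear maps `A → R/K` with
values in `(A + K)/K`; by faithfulness such a map automatically kills `A ∩ K`. -/
structure HasBijectiveHomothety {R : Type*} [CommRing R] (K A : Ideal R) : Prop where
  mem_of_mul_mem : ∀ r, (∀ a ∈ A, r * a ∈ K) → r ∈ K
  exists_eq_mul : ∀ ψ : A →ₗ[R] R ⧸ K, (∀ a, ψ a ∈ A.map (Ideal.Quotient.mk K)) →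
    ∃ s : R, ∀ a : A, ψ a = Ideal.Quotient.mk K (s * a)

section UnprojectionIdeal

variable {R : Type*} [CommRing R]

/-- The ideal `A + zB`, which is the ideal `J` of the theorem. -/
abbrev unprojectionIdeal (A B : Ideal R) (z : R) : Ideal R := A ⊔ Ideal.span {z} * B

namespace unprojectionIdeal

variable {A B : Ideal R} {z : R}

/-- The inclusion `A → A + zB`. -/
def inl (A B : Ideal R) (z : R) : A →ₗ[R] unprojectionIdeal A B z :=
  Submodule.inclusion le_sup_left

/-- Multiplication by `z` as a map `B → A + zB`. -/
def inr (A B : Ideal R) (z : R) : B →ₗ[R] unprojectionIdeal A B z :=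
  (LinearMap.mulLeft R z ∘ₗ B.subtype).codRestrict _ fun b =>
    Ideal.mem_sup_right (Ideal.mul_mem_mul (Ideal.mem_span_singleton_self z) b.2)

@[simp]
theorem coe_inl (a : A) : (inl A B z a : R) = a := rfl

@[simp]
theorem coe_inr (b : B) : (inr A B z b : R) = z * b := rfl

theorem coprod_inl_inr_surjective :
    Function.Surjective ((inl A B z).coprod (inr A B z)) := by
  rintro ⟨x, hx⟩
  obtain ⟨a, ha, w, hw, rfl⟩ := Submodule.mem_sup.1 hx
  obtain ⟨b, hb, rfl⟩ := Ideal.mem_span_singleton_mul.1 hw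
  exact ⟨(⟨a, ha⟩, ⟨b, hb⟩), Subtype.ext rfl⟩

theorem hom_ext {M : Type*} [AddCommGroup M] [Module R M]
    {φ ψ : unprojectionIdeal A B z →ₗ[R] M} (hl : ∀ a, φ (inl A B z a) = ψ (inl A B z a))
    (hr : ∀ b, φ (inr A B z b) = ψ (inr A B z b)) : φ = ψ := by
  ext x
  obtain ⟨⟨a, b⟩, rfl⟩ := coprod_inl_inr_surjective x
  simp only [LinearMap.coprod_apply, map_add, hl, hr]

end unprojectionIdeal

end UnprojectionIdeal

theorem exists_linearMap_comp_eq_of_ker_le {R M N P : Type*} [Ring R] [AddCommGroup M]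
    [AddCommGroup N] [AddCommGroup P] [Module R M] [Module R N] [Module R P] {π : M →ₗ[R] N}
    (hπ : Function.Surjective π) {f : M →ₗ[R] P} (hf : LinearMap.ker π ≤ LinearMap.ker f) :
    ∃ φ : N →ₗ[R] P, φ ∘ₗ π = f := by
  refine ⟨(LinearMap.ker π).liftQ f hf ∘ₗ (π.quotKerEquivOfSurjective hπ).symm, ?_⟩
  ext x
  have hx : (π.quotKerEquivOfSurjective hπ).symm (π x) = (LinearMap.ker π).mkQ x :=
    (LinearEquiv.symm_apply_eq _).2 rfl
  simp [hx]

/-- Hypotheses on ideals `A`, `B` and elements `y`, `z` under which `Hom (A + zB, R)` is generated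
by the inclusion and the unprojection map `a + z b ↦ y b`. -/
structure IsUnprojectionDatum {R : Type*} [CommRing R] (A B : Ideal R) (y z : R) : Prop where
  mul_eq_zero : ∀ r ∈ A ⊓ B, y * r = 0
  mem_of_y_mul_mem : ∀ r, y * r ∈ A → r ∈ A
  mem_of_z_mul_mem : ∀ r, z * r ∈ A → r ∈ A
  eq_zero_of_z_mul_eq_zero : ∀ r, z * r = 0 → r = 0
  homothety_left : HasBijectiveHomothety (Ideal.span {y} * B) A
  homothety_right : HasBijectiveHomothety A B

namespace IsUnprojectionDatum

open unprojectionIdeal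

variable {R : Type*} [CommRing R] {A B : Ideal R} {y z : R}

theorem mem_of_y_mul_eq_zero (h : IsUnprojectionDatum A B y z) {r : R} (hr : y * r = 0) : r ∈ A :=
  h.mem_of_y_mul_mem r (hr ▸ A.zero_mem)

theorem y_mul_mul_eq_zero (h : IsUnprojectionDatum A B y z) {a b : R} (ha : a ∈ A) (hb : b ∈ B) :
    y * (a * b) = 0 :=
  h.mul_eq_zero _ ⟨A.mul_mem_right _ ha, B.mul_mem_left _ hb⟩

theorem eq_zero_of_mem_of_mem (h : IsUnprojectionDatum A B y z) {r : R} (hA : r ∈ A)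
    (hr : r ∈ Ideal.span {y} * B) : r = 0 := by
  obtain ⟨b, hb, rfl⟩ := Ideal.mem_span_singleton_mul.1 hr
  exact h.mul_eq_zero b ⟨h.mem_of_y_mul_mem b hA, hb⟩

theorem exists_eq_y_mul (h : IsUnprojectionDatum A B y z) {r : R}
    (hr : ∀ a ∈ A, r * a ∈ Ideal.span {y} * B) : ∃ b ∈ B, r = y * b := by
  obtain ⟨b, hb, rfl⟩ := Ideal.mem_span_singleton_mul.1 (h.homothety_left.mem_of_mul_mem r hr)
  exact ⟨b, hb, rfl⟩

theorem mem_of_y_mul_mul_eq_zero (h : IsUnprojectionDatum A B y z) {r : R}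
    (hr : ∀ b ∈ B, y * (r * b) = 0) : r ∈ A :=
  h.homothety_right.mem_of_mul_mem r fun b hb => h.mem_of_y_mul_eq_zero (hr b hb)

theorem toSpanSingleton_subtype_injective (h : IsUnprojectionDatum A B y z) :
    Function.Injective (LinearMap.toSpanSingleton R _ (unprojectionIdeal A B z).subtype) := by
  rw [injective_iff_map_eq_zero]
  intro r hr
  have hrA (a) (ha : a ∈ A) : r * a = 0 := LinearMap.congr_fun hr (inl A B z ⟨a, ha⟩)
  have hrB (b) (hb : b ∈ B) : r * b = 0 := h.eq_zero_of_z_mul_eq_zero _ <| by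
    rw [mul_left_comm]
    exact LinearMap.congr_fun hr (inr A B z ⟨b, hb⟩)
  obtain ⟨v, hv, rfl⟩ := h.exists_eq_y_mul fun a ha => by
    rw [hrA a ha]
    exact zero_mem _
  have hvA : v ∈ A := h.mem_of_y_mul_mul_eq_zero fun b hb => by rw [← mul_assoc, hrB b hb]
  exact h.mul_eq_zero v ⟨hvA, hv⟩

theorem exists_unprojection (h : IsUnprojectionDatum A B y z) :
    ∃ φ : unprojectionIdeal A B z →ₗ[R] R,
      φ ∘ₗ (inl A B z).coprod (inr A B z) = (0 : A →ₗ[R] R).coprod (y • B.subtype) := by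
  refine exists_linearMap_comp_eq_of_ker_le coprod_inl_inr_surjective ?_
  rintro ⟨a, b⟩ hab
  have hab : (a : R) + z * b = 0 := congrArg Subtype.val (LinearMap.mem_ker.1 hab)
  have hb : (b : R) ∈ A := h.mem_of_z_mul_mem _ <| by
    rw [eq_neg_of_add_eq_zero_right hab]
    exact neg_mem a.2
  simpa using h.mul_eq_zero b ⟨hb, b.2⟩

/-- The unprojection map `A + zB → R`, `a + z b ↦ y b`. -/
noncomputable def unprojection (h : IsUnprojectionDatum A B y z) :
    unprojectionIdeal A B z →ₗ[R] R :=
  h.exists_unprojection.choose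

@[simp]
theorem unprojection_inl (h : IsUnprojectionDatum A B y z) (a : A) :
    h.unprojection (inl A B z a) = 0 := by
  simpa [unprojection] using LinearMap.congr_fun h.exists_unprojection.choose_spec (a, 0)

@[simp]
theorem unprojection_inr (h : IsUnprojectionDatum A B y z) (b : B) :
    h.unprojection (inr A B z b) = y * b := by
  simpa [unprojection] using LinearMap.congr_fun h.exists_unprojection.choose_spec (0, b)

theorem mul_apply_inr (ψ : unprojectionIdeal A B z →ₗ[R] R) (a : A) (b : B) :
    ψ (inr A B z b) * a = ψ (inl A B z a) * (z * b) := by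
  have : (a : R) • inr A B z b = (z * b : R) • inl A B z a := Subtype.ext (mul_comm _ _)
  simpa [mul_comm] using congrArg ψ this

theorem apply_inl_mem (h : IsUnprojectionDatum A B y z)
    (ψ : unprojectionIdeal A B z →ₗ[R] R) (a : A) : ψ (inl A B z a) ∈ A := by
  refine h.mem_of_y_mul_mul_eq_zero fun b hb => ?_
  have hab : (y * b) • inl A B z a = 0 := Subtype.ext <| by
    simpa [mul_assoc, mul_comm, mul_left_comm] using h.y_mul_mul_eq_zero a.2 hb
  have := congrArg ψ hab
  rw [map_smul, map_zero, smul_eq_mul] at this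
  rw [← this]
  ring

theorem exists_apply_inl_eq_mul (h : IsUnprojectionDatum A B y z)
    (ψ : unprojectionIdeal A B z →ₗ[R] R) : ∃ p : R, ∀ a, ψ (inl A B z a) = p * a := by
  obtain ⟨p, hp⟩ := h.homothety_left.exists_eq_mul
    ((Ideal.span {y} * B).mkQ ∘ₗ ψ ∘ₗ inl A B z)
    fun a => Ideal.mem_map_of_mem _ (h.apply_inl_mem ψ a)
  refine ⟨p, fun a => sub_eq_zero.1 <| h.eq_zero_of_mem_of_mem ?_ (Ideal.Quotient.eq.1 (hp a))⟩
  exact sub_mem (h.apply_inl_mem ψ a) (A.mul_mem_left _ a.2)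

/-- A map `ψ` vanishing on `A` sends `zB` into `yB`, and `y b ↦ b mod A` is well defined on `yB`:
so `ψ` induces an endomorphism of `B` modulo `A`. -/
theorem exists_eq_smul_unprojection_of_apply_inl_eq_zero (h : IsUnprojectionDatum A B y z)
    {ψ : unprojectionIdeal A B z →ₗ[R] R} (hψ : ∀ a, ψ (inl A B z a) = 0) :
    ∃ s : R, ψ = s • h.unprojection := by
  have hψB (b : B) : ∃ v : B, ψ (inr A B z b) = y * v := by
    obtain ⟨v, hv, e⟩ := h.exists_eq_y_mul (r := ψ (inr A B z b)) fun a ha => by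
      rw [mul_apply_inr ψ ⟨a, ha⟩, hψ, zero_mul]
      exact zero_mem _
    exact ⟨⟨v, hv⟩, e⟩
  obtain ⟨δ, hδ⟩ : ∃ δ : LinearMap.range (y • B.subtype) →ₗ[R] R ⧸ A,
      δ ∘ₗ (y • B.subtype).rangeRestrict = A.mkQ ∘ₗ B.subtype :=
    exists_linearMap_comp_eq_of_ker_le (y • B.subtype).surjective_rangeRestrict fun b hb =>
      (Submodule.Quotient.mk_eq_zero A).2
        (h.mem_of_y_mul_eq_zero (congrArg Subtype.val (LinearMap.mem_ker.1 hb)))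
  have hψ_range (b : B) : ψ (inr A B z b) ∈ LinearMap.range (y • B.subtype) := by
    obtain ⟨v, hv⟩ := hψB b
    exact ⟨v, hv.symm⟩
  let β : B →ₗ[R] R ⧸ A := δ ∘ₗ (ψ ∘ₗ inr A B z).codRestrict _ hψ_range
  have hβ {b v : B} (hv : ψ (inr A B z b) = y * v) : β b = Ideal.Quotient.mk A v :=
    (congrArg δ (Subtype.ext hv)).trans (LinearMap.congr_fun hδ v)
  obtain ⟨s, hs⟩ := h.homothety_right.exists_eq_mul β fun b => by
    obtain ⟨v, hv⟩ := hψB b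
    exact hβ hv ▸ Ideal.mem_map_of_mem _ v.2
  refine ⟨s, hom_ext (fun a => by simp [hψ]) fun b => ?_⟩
  obtain ⟨v, hv⟩ := hψB b
  have hvs : (v : R) - s * b ∈ A := Ideal.Quotient.eq.1 ((hβ hv).symm.trans (hs b))
  have := h.mul_eq_zero _ ⟨hvs, sub_mem v.2 (B.mul_mem_left s b.2)⟩
  rw [hv, LinearMap.smul_apply, unprojection_inr, smul_eq_mul]
  linear_combination this

theorem exists_eq_smul_subtype_add_smul_unprojection (h : IsUnprojectionDatum A B y z)
    (ψ : unprojectionIdeal A B z →ₗ[R] R) :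
    ∃ p s : R, ψ = p • (unprojectionIdeal A B z).subtype + s • h.unprojection := by
  obtain ⟨p, hp⟩ := h.exists_apply_inl_eq_mul ψ
  obtain ⟨s, hs⟩ := h.exists_eq_smul_unprojection_of_apply_inl_eq_zero
    (ψ := ψ - p • (unprojectionIdeal A B z).subtype) fun a => by simp [hp]
  exact ⟨p, s, sub_eq_iff_eq_add'.1 hs⟩

theorem smul_unprojection_mem_span_subtype_iff (h : IsUnprojectionDatum A B y z) {s : R} :
    (∃ p : R, p • (unprojectionIdeal A B z).subtype = s • h.unprojection) ↔
      s ∈ unprojectionIdeal A B z := by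
  constructor
  · rintro ⟨p, hp⟩
    have hpA (a : A) : p * a = 0 := by simpa using LinearMap.congr_fun hp (inl A B z a)
    have hpB (b : B) : p * (z * b) = s * (y * b) := by
      simpa using LinearMap.congr_fun hp (inr A B z b)
    obtain ⟨v, hv, rfl⟩ := h.exists_eq_y_mul fun a ha => by
      rw [hpA ⟨a, ha⟩]
      exact zero_mem _
    have hs : s - z * v ∈ A := h.mem_of_y_mul_mul_eq_zero fun b hb => by
      linear_combination -hpB ⟨b, hb⟩
    rw [← sub_add_cancel s (z * v)]
    exact add_mem (inl A B z ⟨_, hs⟩).2 (inr A B z ⟨v, hv⟩).2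
  · intro hs
    obtain ⟨⟨a, v⟩, e⟩ := coprod_inl_inr_surjective ⟨s, hs⟩
    obtain rfl : (a : R) + z * v = s := congrArg Subtype.val e
    refine ⟨y * v, hom_ext (fun a' => ?_) fun b => ?_⟩
    · simpa [mul_assoc, mul_comm, mul_left_comm] using h.y_mul_mul_eq_zero a'.2 v.2
    · simp only [LinearMap.smul_apply, Submodule.subtype_apply, coe_inr, smul_eq_mul,
        unprojection_inr]
      linear_combination -h.y_mul_mul_eq_zero a.2 b.2

theorem nonempty_quotient_range_equiv (h : IsUnprojectionDatum A B y z) :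
    Nonempty (((unprojectionIdeal A B z →ₗ[R] R) ⧸ LinearMap.range
      (LinearMap.toSpanSingleton R _ (unprojectionIdeal A B z).subtype)) ≃ₗ[R]
        R ⧸ unprojectionIdeal A B z) := by
  set S := LinearMap.range (LinearMap.toSpanSingleton R _ (unprojectionIdeal A B z).subtype)
  let Λ : R →ₗ[R] (unprojectionIdeal A B z →ₗ[R] R) ⧸ S :=
    S.mkQ ∘ₗ LinearMap.toSpanSingleton R _ h.unprojection
  have hΛ : Function.Surjective Λ := by
    intro w
    obtain ⟨ψ, rfl⟩ := S.mkQ_surjective w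
    obtain ⟨p, s, rfl⟩ := h.exists_eq_smul_subtype_add_smul_unprojection ψ
    refine ⟨s, (Submodule.Quotient.eq S).2 ⟨-p, ?_⟩⟩
    simp
  have hker : LinearMap.ker Λ = unprojectionIdeal A B z := by
    ext s
    exact (Submodule.Quotient.mk_eq_zero S).trans h.smul_unprojection_mem_span_subtype_iff
  exact ⟨((Submodule.quotEquivOfEq _ _ hker).symm.trans (Λ.quotKerEquivOfSurjective hΛ)).symm⟩

end IsUnprojectionDatum

theorem HasBijectiveHomothety.map_quotient_mk {R : Type*} [CommRing R] {I K A : Ideal R}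
    (h : HasBijectiveHomothety K A) (hIK : I ≤ K) :
    HasBijectiveHomothety (K.map (Ideal.Quotient.mk I)) (A.map (Ideal.Quotient.mk I)) where
  mem_of_mul_mem r hr := by
    obtain ⟨r, rfl⟩ := Ideal.Quotient.mk_surjective r
    refine Ideal.mem_map_of_mem _ (h.mem_of_mul_mem r fun a ha => ?_)
    rw [← Ideal.mem_quotient_iff_mem hIK, map_mul]
    exact hr _ (Ideal.mem_map_of_mem _ ha)
  exists_eq_mul ψ hψ := by
    let ε := DoubleQuot.quotQuotEquivQuotOfLE hIK
    let ι (a : A) : A.map (Ideal.Quotient.mk I) := ⟨_, Ideal.mem_map_of_mem _ a.2⟩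
    let ψ' : A →ₗ[R] R ⧸ K :=
      { toFun a := ε (ψ (ι a))
        map_add' a b := by
          rw [← map_add ε, ← map_add ψ]
          rfl
        map_smul' r a := by
          have : ι (r • a) = Ideal.Quotient.mk I r • ι a := rfl
          rw [this, map_smul, Algebra.smul_def, map_mul, RingHom.id_apply, Algebra.smul_def]
          rfl }
    have hψ' (a : A) : ψ' a ∈ A.map (Ideal.Quotient.mk K) := by
      obtain ⟨x, hx, e⟩ := (Ideal.mem_map_iff_of_surjective _ Ideal.Quotient.mk_surjective).1
        (hψ (ι a))
      obtain ⟨c, hc, rfl⟩ :=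
        (Ideal.mem_map_iff_of_surjective _ Ideal.Quotient.mk_surjective).1 hx
      exact (congrArg ε e) ▸ Ideal.mem_map_of_mem _ hc
    obtain ⟨s, hs⟩ := h.exists_eq_mul ψ' hψ'
    refine ⟨Ideal.Quotient.mk I s, fun ⟨x, hx⟩ => ?_⟩
    obtain ⟨a, ha, rfl⟩ :=
      (Ideal.mem_map_iff_of_surjective _ Ideal.Quotient.mk_surjective).1 hx
    exact ε.injective (hs ⟨a, ha⟩)

theorem isUnprojectionDatum_map_quotient_mk {R : Type*} [CommRing R] {I A B : Ideal R} {y z : R}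
    (hIA : I ≤ A) (hy : ∀ r ∈ A ⊓ B, y * r ∈ I) (hyA : ∀ r, y * r ∈ A → r ∈ A)
    (hzA : ∀ r, z * r ∈ A → r ∈ A) (hzI : ∀ r, z * r ∈ I → r ∈ I)
    (hA : HasBijectiveHomothety (I ⊔ Ideal.span {y} * B) A) (hB : HasBijectiveHomothety A B) :
    IsUnprojectionDatum (A.map (Ideal.Quotient.mk I)) (B.map (Ideal.Quotient.mk I))
      (Ideal.Quotient.mk I y) (Ideal.Quotient.mk I z) where
  mul_eq_zero := by
    rintro r ⟨hrA, hrB⟩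
    obtain ⟨b, hb, rfl⟩ :=
      (Ideal.mem_map_iff_of_surjective _ Ideal.Quotient.mk_surjective).1 hrB
    rw [← map_mul, Ideal.Quotient.eq_zero_iff_mem]
    exact hy b ⟨(Ideal.mem_quotient_iff_mem hIA).1 hrA, hb⟩
  mem_of_y_mul_mem := by
    rw [Ideal.Quotient.mk_surjective.forall]
    intro r
    rw [← map_mul, Ideal.mem_quotient_iff_mem hIA, Ideal.mem_quotient_iff_mem hIA]
    exact hyA r
  mem_of_z_mul_mem := by
    rw [Ideal.Quotient.mk_surjective.forall]
    intro r
    rw [← map_mul, Ideal.mem_quotient_iff_mem hIA, Ideal.mem_quotient_iff_mem hIA]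
    exact hzA r
  eq_zero_of_z_mul_eq_zero := by
    rw [Ideal.Quotient.mk_surjective.forall]
    intro r
    rw [← map_mul, Ideal.Quotient.eq_zero_iff_mem, Ideal.Quotient.eq_zero_iff_mem]
    exact hzI r
  homothety_left := by
    have hmap : (I ⊔ Ideal.span {y} * B).map (Ideal.Quotient.mk I) =
        Ideal.span {Ideal.Quotient.mk I y} * B.map (Ideal.Quotient.mk I) := by
      rw [Ideal.map_sup, Ideal.map_quotient_self, bot_sup_eq, Ideal.map_mul, Ideal.map_span,
        Set.image_singleton]
    exact hmap ▸ hA.map_quotient_mk le_sup_left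
  homothety_right := hB.map_quotient_mk hIA

theorem dvd_of_forall_mem_exists_mul_eq_mul {D : Type*} [CommRing D] [IsDomain D]
    [IsIntegrallyClosed D] {𝔞 : Ideal D} (hfg : 𝔞.FG) (h𝔞 : 𝔞 ≠ ⊥) {c d : D} (hd : d ≠ 0)
    (h : ∀ a ∈ 𝔞, ∃ a' ∈ 𝔞, c * a = d * a') : d ∣ c := by
  let F := FractionRing D
  have hinj : Function.Injective (Algebra.linearMap D F) := IsFractionRing.injective D F
  have hdF : algebraMap D F d ≠ 0 := (map_ne_zero_iff _ hinj).2 hd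
  have hint : IsIntegral D (algebraMap D F c / algebraMap D F d) := by
    refine isIntegral_of_smul_mem_submodule (Submodule.map (Algebra.linearMap D F) 𝔞)
      (fun h => h𝔞 (Submodule.map_injective_of_injective hinj (h.trans (Submodule.map_bot _).symm)))
      (Submodule.FG.map _ hfg) _ ?_
    rintro _ ⟨a, ha, rfl⟩
    obtain ⟨a', ha', e⟩ := h a ha
    refine ⟨a', ha', ?_⟩
    rw [smul_eq_mul, Algebra.linearMap_apply, Algebra.linearMap_apply, div_mul_eq_mul_div,
      eq_div_iff hdF, ← map_mul, ← map_mul, e, mul_comm]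
  obtain ⟨t, ht⟩ := IsIntegrallyClosed.isIntegral_iff.1 hint
  refine ⟨t, hinj ?_⟩
  rw [Algebra.linearMap_apply, Algebra.linearMap_apply, map_mul, ht, mul_div_cancel₀ _ hdF]

theorem exists_forall_map_eq_map_mul {R D : Type*} [CommRing R] [CommRing D] [IsDomain D]
    [IsIntegrallyClosed D] {π : R →+* D} (hπ : Function.Surjective π) {K A : Ideal R}
    (hK : ∀ r ∈ K, π r = 0) (hfg : A.FG) {a₀ : R} (ha₀ : a₀ ∈ A) (hπa₀ : π a₀ ≠ 0)
    (ψ : A →ₗ[R] R ⧸ K) (hψ : ∀ a, ψ a ∈ A.map (Ideal.Quotient.mk K)) :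
    ∃ θ : R, ∀ (a : A) (g : R), ψ a = Ideal.Quotient.mk K g → π g = π (θ * a) := by
  let ρ := Ideal.Quotient.lift K π hK
  have hρ (r : R) (x : R ⧸ K) : ρ (r • x) = π r * ρ x := by
    rw [Algebra.smul_def, map_mul]
    rfl
  have hcomm (a : A) : ρ (ψ ⟨a₀, ha₀⟩) * π a = π a₀ * ρ (ψ a) := by
    rw [mul_comm, ← hρ, ← hρ, ← map_smul, ← map_smul]
    exact congrArg (ρ ∘ ψ) (Subtype.ext (mul_comm _ _))
  have hdvd : π a₀ ∣ ρ (ψ ⟨a₀, ha₀⟩) := by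
    refine dvd_of_forall_mem_exists_mul_eq_mul (𝔞 := A.map π) (hfg.map π)
      (fun h => hπa₀ (Ideal.mem_bot.1 (h ▸ Ideal.mem_map_of_mem π ha₀))) hπa₀ fun b hb => ?_
    obtain ⟨a, ha, rfl⟩ := (Ideal.mem_map_iff_of_surjective π hπ).1 hb
    refine ⟨ρ (ψ ⟨a, ha⟩), ?_, hcomm ⟨a, ha⟩⟩
    have := Ideal.mem_map_of_mem ρ (hψ ⟨a, ha⟩)
    rwa [Ideal.map_map, show ρ.comp (Ideal.Quotient.mk K) = π from RingHom.ext fun _ => rfl] at this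
  obtain ⟨t, ht⟩ := hdvd
  obtain ⟨θ, rfl⟩ := hπ t
  refine ⟨θ, fun a g hg => mul_left_cancel₀ hπa₀ ?_⟩
  rw [show π g = ρ (ψ a) from congrArg ρ hg.symm, ← hcomm, ht, map_mul, mul_assoc]

section SquarefreeMonomialIdeals

open MvPolynomial

variable {σ k : Type*}

section CommSemiring

variable [CommSemiring k]

variable (k) in
/-- The ideal generated by the squarefree monomials `∏ i ∈ u, X i` with `u ∈ 𝒰`, i.e. the
Stanley–Reisner ideal of the simplicial complex whose non-faces are the supersets of members
of `𝒰`. -/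
noncomputable def sqfreeIdeal (𝒰 : Set (Finset σ)) : Ideal (MvPolynomial σ k) :=
  Ideal.span ((fun u : Finset σ => ∏ i ∈ u, X i) '' 𝒰)

theorem prod_X_mem_sqfreeIdeal {𝒰 : Set (Finset σ)} {u : Finset σ} (hu : u ∈ 𝒰) :
    ∏ i ∈ u, X i ∈ sqfreeIdeal k 𝒰 :=
  Ideal.subset_span ⟨u, hu, rfl⟩

theorem sqfreeIdeal_union (𝒰 𝒱 : Set (Finset σ)) :
    sqfreeIdeal k (𝒰 ∪ 𝒱) = sqfreeIdeal k 𝒰 ⊔ sqfreeIdeal k 𝒱 := by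
  rw [sqfreeIdeal, Set.image_union, Ideal.span_union, sqfreeIdeal, sqfreeIdeal]

theorem sqfreeIdeal_fg {𝒰 : Set (Finset σ)} (h𝒰 : 𝒰.Finite) : (sqfreeIdeal k 𝒰).FG :=
  Submodule.fg_span (h𝒰.image _)

theorem prod_X_eq_monomial_indicator (u : Finset σ) :
    ∏ i ∈ u, (X i : MvPolynomial σ k) = monomial (Finsupp.indicator u fun _ _ => 1) 1 := by
  rw [Finsupp.indicator_eq_sum_single u fun _ => 1, monomial_sum_one]
  rfl

theorem indicator_one_le_iff {u : Finset σ} {e : σ →₀ ℕ} :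
    (Finsupp.indicator u fun _ _ => 1) ≤ e ↔ u ⊆ e.support := by
  classical
  simp_rw [Finsupp.le_def, Finsupp.indicator_apply, Finset.subset_iff, Finsupp.mem_support_iff]
  refine forall_congr' fun i => ?_
  by_cases hi : i ∈ u <;> simp [hi, Nat.one_le_iff_ne_zero]

theorem support_add_indicator_one [DecidableEq σ] (e : σ →₀ ℕ) (u : Finset σ) :
    (e + Finsupp.indicator u fun _ _ => 1).support = e.support ∪ u := by
  ext i
  by_cases hi : i ∈ u <;> simp [Finsupp.indicator_apply, hi]

theorem mem_sqfreeIdeal {𝒰 : Set (Finset σ)} {f : MvPolynomial σ k} :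
    f ∈ sqfreeIdeal k 𝒰 ↔ ∀ e ∈ f.support, ∃ u ∈ 𝒰, u ⊆ e.support := by
  simp_rw [sqfreeIdeal, prod_X_eq_monomial_indicator]
  rw [← Set.image_image (fun e => monomial e (1 : k)), mem_ideal_span_monomial_image]
  simp_rw [Set.exists_mem_image, indicator_one_le_iff]

theorem prod_X_mul_mem_sqfreeIdeal [DecidableEq σ] {𝒰 : Set (Finset σ)} {u : Finset σ}
    {f : MvPolynomial σ k} :
    (∏ i ∈ u, X i) * f ∈ sqfreeIdeal k 𝒰 ↔
      ∀ e ∈ f.support, ∃ v ∈ 𝒰, v ⊆ e.support ∪ u := by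
  have hsupp (d : σ →₀ ℕ) :
      (f * monomial d 1).support = f.support.map (addRightEmbedding d) :=
    AddMonoidAlgebra.support_coeff_mul_single f _ (by simp) _
  rw [mem_sqfreeIdeal, mul_comm, prod_X_eq_monomial_indicator, hsupp]
  simp only [Finset.forall_mem_map, addRightEmbedding_apply, support_add_indicator_one]

theorem mem_sqfreeIdeal_of_prod_X_mul_mem {𝒰 : Set (Finset σ)} {u : Finset σ}
    (h : ∀ v ∈ 𝒰, Disjoint v u) {f : MvPolynomial σ k}
    (hf : (∏ i ∈ u, X i) * f ∈ sqfreeIdeal k 𝒰) : f ∈ sqfreeIdeal k 𝒰 := by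
  classical
  rw [prod_X_mul_mem_sqfreeIdeal] at hf
  rw [mem_sqfreeIdeal]
  intro e he
  obtain ⟨v, hv, hve⟩ := hf e he
  exact ⟨v, hv, (h v hv).left_le_of_le_sup_right hve⟩

end CommSemiring

section Restrict

variable [CommSemiring k]

variable (k) in
/-- The restriction `k[x_i : i ∈ σ] → k[x_i : i ∈ F]` to a coordinate subspace, sending the
variables outside `F` to `0`. -/
noncomputable def restrictVars (F : Finset σ) : MvPolynomial σ k →ₐ[k] MvPolynomial F k :=
  killCompl (Subtype.val_injective (p := (· ∈ F)))

theorem restrictVars_surjective (F : Finset σ) : Function.Surjective (restrictVars k F) :=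
  fun p => ⟨rename _ p, killCompl_rename_app _ p⟩

theorem restrictVars_eq_iff {F : Finset σ} {f g : MvPolynomial σ k} :
    restrictVars k F f = restrictVars k F g ↔
      ∀ e : σ →₀ ℕ, e.support ⊆ F → coeff e f = coeff e g := by
  classical
  simp_rw [MvPolynomial.ext_iff, restrictVars, coeff_killCompl]
  constructor
  · intro h e he
    rw [← Finsupp.mapDomain_comapDomain _ Subtype.val_injective e
      (by simpa [Set.subset_def, Finset.subset_iff] using he)]
    exact h _
  · intro h e
    refine h _ (Finsupp.mapDomain_support.trans ?_)
    simp +contextual [Finset.subset_iff]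

theorem restrictVars_eq_zero_iff {F : Finset σ} {f : MvPolynomial σ k} :
    restrictVars k F f = 0 ↔ ∀ e ∈ f.support, ¬e.support ⊆ F := by
  rw [← map_zero (restrictVars k F), restrictVars_eq_iff]
  exact forall_congr' fun e => by rw [mem_support_iff, coeff_zero, not_imp_not]

theorem restrictVars_prod_X_ne_zero [Nontrivial k] {F u : Finset σ} (h : u ⊆ F) :
    restrictVars k F (∏ i ∈ u, X i) ≠ 0 := by
  classical
  rw [prod_X_eq_monomial_indicator, Ne, restrictVars_eq_zero_iff, not_forall₂]
  refine ⟨_, mem_support_iff.2 (by rw [coeff_monomial, if_pos rfl]; exact one_ne_zero), ?_⟩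
  exact not_not.2 ((Finsupp.support_indicator_subset _ _).trans h)

theorem exists_restrictVars_eq_of_coeff_eq {ι : Type*} (s : Finset ι) (F : ι → Finset σ)
    (θ : ι → MvPolynomial σ k) (h : ∀ i ∈ s, ∀ j ∈ s, ∀ e : σ →₀ ℕ, e.support ⊆ F i →
      e.support ⊆ F j → coeff e (θ i) = coeff e (θ j)) :
    ∃ g : MvPolynomial σ k, ∀ i ∈ s, restrictVars k (F i) g = restrictVars k (F i) (θ i) := by
  classical
  have hc (e : σ →₀ ℕ) : ∃ c : k, ∀ i ∈ s, e.support ⊆ F i → c = coeff e (θ i) := by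
    by_cases he : ∃ j ∈ s, e.support ⊆ F j
    · obtain ⟨j, hj, hje⟩ := he
      exact ⟨coeff e (θ j), fun i hi hie => h j hj i hi e hje hie⟩
    · push Not at he
      exact ⟨0, fun i hi hie => (he i hi hie).elim⟩
  choose c hc using hc
  refine ⟨∑ e ∈ s.biUnion fun i => (θ i).support, monomial e (c e), fun i hi => ?_⟩
  rw [restrictVars_eq_iff]
  intro e he
  simp only [coeff_sum, coeff_monomial, Finset.sum_ite_eq', hc e i hi he, ite_eq_left_iff]
  intro hmem
  exact (notMem_support_iff.1 fun hsupp => hmem (Finset.mem_biUnion.2 ⟨i, hi, hsupp⟩)).symm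

end Restrict

section Facets

variable {ι : Type*} {𝒰 𝒱 : Set (Finset σ)} {s : Finset ι} {F : ι → Finset σ}

/-- Adjacency of the facets `F i` and `F j` in the star of `W`: they share a member of `𝒰`. -/
def FacetLink (𝒰 : Set (Finset σ)) (s : Finset ι) (F : ι → Finset σ) (W : Finset σ) (i j : ι) :
    Prop :=
  (i ∈ s ∧ W ⊆ F i) ∧ (j ∈ s ∧ W ⊆ F j) ∧ ∃ u ∈ 𝒰, u ⊆ F i ∧ u ⊆ F j

/-- The sets `F i`, `i ∈ s`, are the facets of the simplicial complex with non-faces generated by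
`𝒱`; each contains a member of `𝒰`, and the star of every face is connected through
`FacetLink`. -/
structure IsLinkedFacetFamily (𝒱 𝒰 : Set (Finset σ)) (s : Finset ι) (F : ι → Finset σ) :
    Prop where
  exists_subset_iff : ∀ W, (∃ v ∈ 𝒱, v ⊆ W) ↔ ∀ i ∈ s, ¬W ⊆ F i
  exists_subset_facet : ∀ i ∈ s, ∃ u ∈ 𝒰, u ⊆ F i
  reflTransGen_facetLink : ∀ W, ∀ i ∈ s, W ⊆ F i → ∀ j ∈ s, W ⊆ F j →
    Relation.ReflTransGen (FacetLink 𝒰 s F W) i j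

theorem coeff_eq_of_facetLink [CommRing k]
    {ψ : sqfreeIdeal k 𝒰 →ₗ[MvPolynomial σ k] MvPolynomial σ k ⧸ sqfreeIdeal k 𝒱}
    {θ : ι → MvPolynomial σ k}
    (hθ : ∀ i ∈ s, ∀ a g, ψ a = Ideal.Quotient.mk _ g →
      restrictVars k (F i) g = restrictVars k (F i) (θ i * a))
    {e : σ →₀ ℕ} {i j : ι} (hij : FacetLink 𝒰 s F e.support i j) :
    coeff e (θ i) = coeff e (θ j) := by
  classical
  obtain ⟨⟨hi, hei⟩, ⟨hj, hej⟩, u, hu, hui, huj⟩ := hij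
  obtain ⟨g, hg⟩ := Ideal.Quotient.mk_surjective (ψ ⟨_, prod_X_mem_sqfreeIdeal hu⟩)
  have hcoeff {l : ι} (hl : l ∈ s) (hel : e.support ⊆ F l) (hul : u ⊆ F l) :
      coeff (e + Finsupp.indicator u fun _ _ => 1) g = coeff e (θ l) := by
    rw [restrictVars_eq_iff.1 (hθ l hl _ g hg.symm) _
      (support_add_indicator_one e u ▸ Finset.union_subset hel hul), Subtype.coe_mk,
      prod_X_eq_monomial_indicator, coeff_mul_monomial, mul_one]
  rw [← hcoeff hi hei hui, hcoeff hj hej huj]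

namespace IsLinkedFacetFamily

theorem mem_sqfreeIdeal_iff [CommSemiring k] (h : IsLinkedFacetFamily 𝒱 𝒰 s F)
    {f : MvPolynomial σ k} :
    f ∈ sqfreeIdeal k 𝒱 ↔ ∀ i ∈ s, restrictVars k (F i) f = 0 := by
  simp_rw [mem_sqfreeIdeal, h.exists_subset_iff, restrictVars_eq_zero_iff]
  exact ⟨fun H i hi e he => H e he i hi, fun H e he i hi => H i hi e he⟩

variable [CommRing k] [IsDomain k]

theorem mem_sqfreeIdeal_of_mul_mem (h : IsLinkedFacetFamily 𝒱 𝒰 s F) {r : MvPolynomial σ k}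
    (hr : ∀ a ∈ sqfreeIdeal k 𝒰, r * a ∈ sqfreeIdeal k 𝒱) : r ∈ sqfreeIdeal k 𝒱 := by
  rw [h.mem_sqfreeIdeal_iff]
  intro i hi
  obtain ⟨u, hu, hui⟩ := h.exists_subset_facet i hi
  have := h.mem_sqfreeIdeal_iff.1 (hr _ (prod_X_mem_sqfreeIdeal hu)) i hi
  rw [map_mul] at this
  exact (mul_eq_zero.1 this).resolve_right (restrictVars_prod_X_ne_zero hui)

theorem hasBijectiveHomothety [UniqueFactorizationMonoid k] (h : IsLinkedFacetFamily 𝒱 𝒰 s F)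
    (h𝒰 : 𝒰.Finite) : HasBijectiveHomothety (sqfreeIdeal k 𝒱) (sqfreeIdeal k 𝒰) where
  mem_of_mul_mem _ := h.mem_sqfreeIdeal_of_mul_mem
  exists_eq_mul ψ hψ := by
    have hlocal (i : ι) : ∃ θ, i ∈ s → ∀ a g, ψ a = Ideal.Quotient.mk _ g →
        restrictVars k (F i) g = restrictVars k (F i) (θ * a) := by
      by_cases hi : i ∈ s
      · obtain ⟨u, hu, hui⟩ := h.exists_subset_facet i hi
        obtain ⟨θ, hθ⟩ := exists_forall_map_eq_map_mul
          (π := (restrictVars k (F i) : MvPolynomial σ k →+* MvPolynomial (F i) k))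
          (restrictVars_surjective (F i)) (fun r hr => h.mem_sqfreeIdeal_iff.1 hr i hi)
          (sqfreeIdeal_fg h𝒰) (prod_X_mem_sqfreeIdeal hu) (restrictVars_prod_X_ne_zero hui) ψ hψ
        exact ⟨θ, fun _ => hθ⟩
      · exact ⟨0, fun hi' => (hi hi').elim⟩
    choose θ hθ using hlocal
    obtain ⟨t, ht⟩ := exists_restrictVars_eq_of_coeff_eq s F θ fun i hi j hj e hei hej => by
      have hpath := h.reflTransGen_facetLink e.support i hi hei j hj hej
      clear hj hej
      induction hpath with
      | refl => rfl
      | tail _ hjl ih => exact ih.trans (coeff_eq_of_facetLink hθ hjl)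
    refine ⟨t, fun a => ?_⟩
    obtain ⟨g, hg⟩ := Ideal.Quotient.mk_surjective (ψ a)
    rw [← hg, Ideal.Quotient.eq, h.mem_sqfreeIdeal_iff]
    intro i hi
    rw [map_sub, map_mul, ht i hi, ← map_mul, hθ i hi a g hg.symm, sub_self]

end IsLinkedFacetFamily

end Facets

end SquarefreeMonomialIdeals

section SparseSets

open Finset

/-- The `n`-element subsets of `[p, q]` without two consecutive elements. -/
def sparseSets (n p q : ℕ) : Finset (Finset ℕ) :=
  {u ∈ (Icc p q).powersetCard n | ∀ x ∈ u, x + 1 ∉ u}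

variable {n p q t : ℕ} {u v : Finset ℕ}

theorem mem_sparseSets :
    u ∈ sparseSets n p q ↔ #u = n ∧ (∀ x ∈ u, p ≤ x ∧ x ≤ q) ∧ ∀ x ∈ u, x + 1 ∉ u := by
  simp only [sparseSets, mem_filter, mem_powersetCard, subset_iff, mem_Icc]
  tauto

theorem sparseSets_mono {p' q' : ℕ} (hp : p' ≤ p) (hq : q ≤ q') :
    sparseSets n p q ⊆ sparseSets n p' q' := by
  intro u
  simp only [mem_sparseSets]
  exact fun ⟨hcard, hu, hsparse⟩ =>
    ⟨hcard, fun x hx => ⟨hp.trans (hu x hx).1, (hu x hx).2.trans hq⟩, hsparse⟩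

theorem subset_Icc_of_mem_sparseSets {a b : ℕ} (hp : a ≤ p) (hq : q ≤ b)
    (hu : u ∈ sparseSets n p q) : u ⊆ Icc a b :=
  fun x hx => mem_Icc.2
    ⟨hp.trans ((mem_sparseSets.1 hu).2.1 x hx).1, ((mem_sparseSets.1 hu).2.1 x hx).2.trans hq⟩

theorem empty_mem_sparseSets : ∅ ∈ sparseSets 0 p q := by simp [mem_sparseSets]

theorem eq_empty_of_mem_sparseSets_zero (hu : u ∈ sparseSets 0 p q) : u = ∅ :=
  card_eq_zero.1 (mem_sparseSets.1 hu).1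

theorem mem_sparseSets_of_first_notMem (hu : u ∈ sparseSets n p q) (hp : p ∉ u) :
    u ∈ sparseSets n (p + 1) q := by
  grind [mem_sparseSets]

theorem mem_sparseSets_of_last_notMem (hu : u ∈ sparseSets n p (q + 1)) (hq : q + 1 ∉ u) :
    u ∈ sparseSets n p q := by
  grind [mem_sparseSets]

theorem insert_mem_sparseSets (hu : u ∈ sparseSets n (t + 2) q) (hp : p ≤ t) (hq : t ≤ q) :
    insert t u ∈ sparseSets (n + 1) p q := by
  grind [mem_sparseSets]

theorem insert_last_mem_sparseSets (hu : u ∈ sparseSets n p q) (hp : p ≤ q + 2) :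
    insert (q + 2) u ∈ sparseSets (n + 1) p (q + 2) := by
  grind [mem_sparseSets]

theorem singleton_mem_sparseSets (hp : p ≤ t) (hq : t ≤ q) : {t} ∈ sparseSets 1 p q :=
  insert_mem_sparseSets empty_mem_sparseSets hp hq

theorem exists_eq_insert_of_mem_sparseSets (hu : u ∈ sparseSets (n + 1) p q) :
    ∃ t v, u = insert t v ∧ p ≤ t ∧ t ≤ q ∧ v ∈ sparseSets n (t + 2) q := by
  obtain ⟨hcard, hbd, hsparse⟩ := mem_sparseSets.1 hu
  have hne : u.Nonempty := card_pos.1 (by omega)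
  refine ⟨u.min' hne, u.erase (u.min' hne), (insert_erase (u.min'_mem hne)).symm,
    (hbd _ (u.min'_mem hne)).1, (hbd _ (u.min'_mem hne)).2, ?_⟩
  have hmin := u.min'_le
  grind [mem_sparseSets, u.min'_mem hne]

theorem exists_subset_mem_sparseSets_add_two_left (hu : u ∈ sparseSets (n + 1) p q) :
    ∃ v ∈ sparseSets n (p + 2) q, v ⊆ u := by
  obtain ⟨t, v, rfl, hpt, -, hv⟩ := exists_eq_insert_of_mem_sparseSets hu
  exact ⟨v, sparseSets_mono (by omega) le_rfl hv, subset_insert t v⟩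

theorem exists_subset_mem_sparseSets_sub_two_right (hu : u ∈ sparseSets (n + 1) p (q + 2)) :
    ∃ v ∈ sparseSets n p q, v ⊆ u := by
  obtain ⟨hcard, hbd, hsparse⟩ := mem_sparseSets.1 hu
  have hne : u.Nonempty := card_pos.1 (by omega)
  have hmax := u.le_max'
  refine ⟨u.erase (u.max' hne), ?_, erase_subset _ _⟩
  grind [mem_sparseSets, u.max'_mem hne]

theorem exists_eq_insert_insert_of_mem_sparseSets (hu : u ∈ sparseSets (n + 2) p (q + 2))
    (hp : p ∈ u) (hq : q + 2 ∈ u) (hpq : p ≠ q + 2) :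
    ∃ v ∈ sparseSets n (p + 2) q, u = insert p (insert (q + 2) v) := by
  refine ⟨(u.erase p).erase (q + 2), ?_, ?_⟩ <;> grind [mem_sparseSets]

theorem add_two_mul_le_of_mem_sparseSets (hu : u ∈ sparseSets (n + 1) p q) : p + 2 * n ≤ q := by
  induction n generalizing p u with
  | zero =>
    obtain ⟨t, _, -, hp, hq, -⟩ := exists_eq_insert_of_mem_sparseSets hu
    omega
  | succ n ih =>
    obtain ⟨v, hv, -⟩ := exists_subset_mem_sparseSets_add_two_left hu
    have := ih hv
    omega

theorem exists_subset_mem_sparseSets_or {M : ℕ} {W : Finset ℕ} (hM : p + 2 * n ≤ M)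
    (hu : u ∈ sparseSets (n + 1) p (M + 1)) (huW : u ⊆ W)
    (hv : v ∈ sparseSets n (p + 1) M) (hvW : v ⊆ W) :
    (∃ w ∈ sparseSets (n + 1) (p + 1) (M + 1), w ⊆ W) ∨
      ∃ w ∈ sparseSets (n + 1) p M, w ⊆ W := by
  induction n generalizing p u v with
  | zero =>
    obtain ⟨t, u', rfl, hpt, htM, -⟩ := exists_eq_insert_of_mem_sparseSets hu
    have ht : {t} ⊆ W := singleton_subset_iff.2 (huW (mem_insert_self t u'))
    rcases hpt.eq_or_lt with rfl | hpt
    · exact .inr ⟨{p}, singleton_mem_sparseSets le_rfl (by omega), ht⟩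
    · exact .inl ⟨{t}, singleton_mem_sparseSets hpt htM, ht⟩
  | succ n ih =>
    obtain ⟨t, u', rfl, hpt, htM, hu'⟩ := exists_eq_insert_of_mem_sparseSets hu
    obtain ⟨s, v', rfl, hps, hsM, hv'⟩ := exists_eq_insert_of_mem_sparseSets hv
    obtain ⟨htW, hu'W⟩ := insert_subset_iff.1 huW
    obtain ⟨hsW, hv'W⟩ := insert_subset_iff.1 hvW
    rcases hpt.lt_or_eq with hpt | rfl
    · exact .inl ⟨_, insert_mem_sparseSets hu' hpt htM, huW⟩
    rcases hps.lt_or_eq with hps | rfl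
    · exact .inr ⟨_, insert_mem_sparseSets (insert_mem_sparseSets hv' hps hsM) le_rfl (by omega),
        insert_subset htW hvW⟩
    rcases ih (by omega) hu' hu'W hv' hv'W with ⟨w, hw, hwW⟩ | ⟨w, hw, hwW⟩
    · exact .inl ⟨_, insert_mem_sparseSets hw le_rfl (by omega), insert_subset hsW hwW⟩
    · exact .inr ⟨_, insert_mem_sparseSets hw le_rfl (by omega), insert_subset htW hwW⟩

end SparseSets

section PairCover

open Finset

/-- The union of the pairs `{x, x + 1}` with `x ∈ P`. As in Gale's evenness condition, the sets
`paired P` with `P` sparse are the facets of the simplicial complex whose minimal non-faces are the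
sparse sets with one element more. -/
def paired (P : Finset ℕ) : Finset ℕ := P.biUnion fun x => {x, x + 1}

variable {n p r : ℕ} {P Q W : Finset ℕ}

theorem mem_paired {x : ℕ} : x ∈ paired P ↔ ∃ y ∈ P, x = y ∨ x = y + 1 := by
  simp [paired]

theorem subset_paired (P : Finset ℕ) : P ⊆ paired P :=
  fun x hx => mem_paired.2 ⟨x, hx, .inl rfl⟩

theorem paired_insert (t : ℕ) (P : Finset ℕ) :
    paired (insert t P) = insert t (insert (t + 1) (paired P)) := by
  simp [paired, biUnion_insert, insert_union]

theorem card_le_of_subset_paired {u : Finset ℕ} (hu : ∀ x ∈ u, x + 1 ∉ u) (h : u ⊆ paired P) :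
    #u ≤ #P := by
  have hinter : u ∩ paired P = P.biUnion fun x => u ∩ {x, x + 1} := inter_biUnion ..
  rw [← inter_eq_left.2 h, hinter, ← mul_one #P]
  refine card_biUnion_le_card_mul _ _ _ fun x _ => card_le_one.2 ?_
  grind

/-- `P` is an `n`-element sparse subset of `[p, r]` whose pairs cover `W ∩ [p, r + 1]`. -/
def IsPairCover (n p r : ℕ) (W P : Finset ℕ) : Prop :=
  P ∈ sparseSets n p r ∧ ∀ x ∈ W, p ≤ x → x ≤ r + 1 → x ∈ paired P

/-- Two pair covers of `W` are linked when their facets share a sparse `n`-element subset of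
`[p + 1, r]`. -/
def PairCoverLink (n p r : ℕ) (W P Q : Finset ℕ) : Prop :=
  IsPairCover n p r W P ∧ IsPairCover n p r W Q ∧
    ∃ u ∈ sparseSets n (p + 1) r, u ⊆ paired P ∧ u ⊆ paired Q

namespace IsPairCover

theorem insert_left (hP : IsPairCover n (p + 2) r W P) (hp : p ≤ r) :
    IsPairCover (n + 1) p r W (insert p P) := by
  refine ⟨insert_mem_sparseSets hP.1 le_rfl hp, ?_⟩
  have := hP.2
  rw [paired_insert]
  grind

theorem of_add_one_left (hP : IsPairCover n (p + 1) r W P) (hp : p ∉ W) :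
    IsPairCover n p r W P := by
  refine ⟨sparseSets_mono (by omega) le_rfl hP.1, ?_⟩
  have := hP.2
  grind

theorem not_subset (hP : IsPairCover n p r W P) {u : Finset ℕ}
    (hu : u ∈ sparseSets (n + 1) p (r + 1)) : ¬u ⊆ W := by
  intro huW
  obtain ⟨hcard, hbd, hsparse⟩ := mem_sparseSets.1 hu
  have hu_paired : u ⊆ paired P :=
    fun x hx => hP.2 x (huW hx) (hbd x hx).1 (hbd x hx).2
  have := card_le_of_subset_paired hsparse hu_paired
  rw [hcard, (mem_sparseSets.1 hP.1).1] at this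
  omega

theorem exists_eq_insert (hP : IsPairCover (n + 1) p r W P)
    (h : p ∈ W ∨ p + 2 * (n + 1) = r + 2) :
    ∃ Q, P = insert p Q ∧ IsPairCover n (p + 2) r W Q := by
  obtain ⟨hPmem, hPW⟩ := hP
  obtain ⟨t, Q, rfl, hpt, htr, hQ⟩ := exists_eq_insert_of_mem_sparseSets hPmem
  rw [paired_insert] at hPW
  have hQbd := (mem_sparseSets.1 hQ).2.1
  obtain rfl : t = p := by
    by_contra hne
    rcases h with hp | hr
    · grind [mem_paired]
    · have := add_two_mul_le_of_mem_sparseSets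
        (insert_mem_sparseSets (p := p + 1) hQ (by omega) htr)
      omega
  refine ⟨Q, rfl, hQ, ?_⟩
  grind

end IsPairCover

theorem exists_isPairCover {n p r : ℕ} {W : Finset ℕ} (hn : p + 2 * n ≤ r + 2)
    (hW : ∀ u ∈ sparseSets (n + 1) p (r + 1), ¬u ⊆ W) : ∃ P, IsPairCover n p r W P := by
  rcases n with _ | n
  · refine ⟨∅, empty_mem_sparseSets, fun x hx hpx hxr => ?_⟩
    exact (hW {x} (singleton_mem_sparseSets hpx hxr) (singleton_subset_iff.2 hx)).elim
  · by_cases hp : p ∈ W ∨ p + 2 * (n + 1) = r + 2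
    · obtain ⟨P, hP⟩ := exists_isPairCover (n := n) (p := p + 2) (r := r) (W := W) (by omega)
        fun u hu huW => by
          rcases hp with hp | hp
          · exact hW _ (insert_mem_sparseSets hu le_rfl (by omega)) (insert_subset hp huW)
          · have := add_two_mul_le_of_mem_sparseSets hu
            omega
      exact ⟨_, hP.insert_left (by omega)⟩
    · obtain ⟨hpW, hpr⟩ := not_or.1 hp
      obtain ⟨P, hP⟩ := exists_isPairCover (n := n + 1) (p := p + 1) (r := r) (W := W) (by omega)
        fun u hu => hW u (sparseSets_mono (by omega) le_rfl hu)
      exact ⟨P, hP.of_add_one_left hpW⟩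
termination_by r + 2 - p

theorem exists_isPairCover_iff (hn : p + 2 * n ≤ r + 2) :
    (∃ P, IsPairCover n p r W P) ↔ ∀ u ∈ sparseSets (n + 1) p (r + 1), ¬u ⊆ W :=
  ⟨fun ⟨_, hP⟩ _ hu => hP.not_subset hu, exists_isPairCover hn⟩

theorem exists_subset_paired_shift (hn : p + 2 * n ≤ r + 1) (hP : P ∈ sparseSets n p r) :
    ∃ Q ∈ sparseSets n (p + 1) r, Q ⊆ paired P ∧ paired P ⊆ insert p (paired Q) := by
  induction n generalizing p P with
  | zero =>
    obtain rfl := eq_empty_of_mem_sparseSets_zero hP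
    exact ⟨∅, empty_mem_sparseSets, empty_subset _, subset_insert _ _⟩
  | succ n ih =>
    obtain ⟨t, P', rfl, hpt, htr, hP'⟩ := exists_eq_insert_of_mem_sparseSets hP
    rcases hpt.lt_or_eq with hpt | rfl
    · exact ⟨_, insert_mem_sparseSets hP' hpt htr, subset_paired _, subset_insert _ _⟩
    · obtain ⟨Q, hQ, hQP, hPQ⟩ := ih (by omega) hP'
      refine ⟨insert (p + 1) Q, insert_mem_sparseSets hQ le_rfl (by omega), ?_, ?_⟩ <;>
        grind [paired_insert]

theorem IsPairCover.exists_shift (hP : IsPairCover n p r W P) (hn : p + 2 * n ≤ r + 1) :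
    ∃ Q, IsPairCover n (p + 1) r W Q ∧ Q ⊆ paired P := by
  obtain ⟨Q, hQ, hQP, hPQ⟩ := exists_subset_paired_shift hn hP.1
  refine ⟨Q, ⟨hQ, ?_⟩, hQP⟩
  have := hP.2
  grind

namespace PairCoverLink

theorem symm (h : PairCoverLink n p r W P Q) : PairCoverLink n p r W Q P :=
  ⟨h.2.1, h.1, h.2.2.imp fun _ hu => ⟨hu.1, hu.2.2, hu.2.1⟩⟩

theorem insert_left (h : PairCoverLink n (p + 2) r W P Q) (hp : p + 1 ≤ r) :
    PairCoverLink (n + 1) p r W (insert p P) (insert p Q) := by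
  obtain ⟨hP, hQ, u, hu, huP, huQ⟩ := h
  refine ⟨hP.insert_left (by omega), hQ.insert_left (by omega), insert (p + 1) u,
    insert_mem_sparseSets hu le_rfl hp, ?_, ?_⟩ <;> grind [paired_insert]

theorem of_add_one_left (h : PairCoverLink n (p + 1) r W P Q) (hp : p ∉ W) :
    PairCoverLink n p r W P Q := by
  obtain ⟨hP, hQ, u, hu, huPQ⟩ := h
  exact ⟨hP.of_add_one_left hp, hQ.of_add_one_left hp, u, sparseSets_mono (by omega) le_rfl hu,
    huPQ⟩

end PairCoverLink

theorem IsPairCover.reflTransGen {n p r : ℕ} {W P Q : Finset ℕ} (hP : IsPairCover n p r W P)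
    (hQ : IsPairCover n p r W Q) : Relation.ReflTransGen (PairCoverLink n p r W) P Q := by
  rcases n with _ | n
  · rw [eq_empty_of_mem_sparseSets_zero hP.1, eq_empty_of_mem_sparseSets_zero hQ.1]
  have hpr := add_two_mul_le_of_mem_sparseSets hP.1
  by_cases hp : p ∈ W ∨ p + 2 * (n + 1) = r + 2
  · obtain ⟨P', rfl, hP'⟩ := hP.exists_eq_insert hp
    obtain ⟨Q', rfl, hQ'⟩ := hQ.exists_eq_insert hp
    rcases n with _ | n
    · rw [eq_empty_of_mem_sparseSets_zero hP'.1, eq_empty_of_mem_sparseSets_zero hQ'.1]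
    · exact (IsPairCover.reflTransGen hP' hQ').lift (insert p) fun _ _ h => h.insert_left (by omega)
  · obtain ⟨hpW, hpr'⟩ := not_or.1 hp
    have hshift {R : Finset ℕ} (hR : IsPairCover (n + 1) p r W R) :
        ∃ R', IsPairCover (n + 1) (p + 1) r W R' ∧ PairCoverLink (n + 1) p r W R R' := by
      obtain ⟨R', hR', hsub⟩ := hR.exists_shift (by omega)
      exact ⟨R', hR', hR, hR'.of_add_one_left hpW, R', hR'.1, hsub, subset_paired R'⟩
    obtain ⟨P', hP', hPP'⟩ := hshift hP
    obtain ⟨Q', hQ', hQQ'⟩ := hshift hQ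
    have hmono : PairCoverLink (n + 1) (p + 1) r W ≤ PairCoverLink (n + 1) p r W :=
      fun _ _ h => h.of_add_one_left hpW
    have hpath := Relation.ReflTransGen.mono hmono _ _ (IsPairCover.reflTransGen hP' hQ')
    exact (hpath.head hPP').tail hQQ'.symm
termination_by r + 2 - p

end PairCover

section OneIndexed

open MvPolynomial

variable {N : ℕ} {u v w : Finset ℕ}

variable (N) in
/-- The set of variables `x_t` of `k[x_1, …, x_N]` with `t ∈ u`. Since `x_t` is `X ⟨t - 1, _⟩`,
indices are shifted by one. -/
def varSet (u : Finset ℕ) : Finset (Fin N) := {i | (i : ℕ) + 1 ∈ u}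

/-- The set of indices `t ∈ [1, N]` with `x_t ∈ W`, inverse to `varSet`. -/
def indexSet (W : Finset (Fin N)) : Finset ℕ :=
  W.map (Fin.valEmbedding.trans (addRightEmbedding 1))

theorem mem_varSet {i : Fin N} : i ∈ varSet N u ↔ (i : ℕ) + 1 ∈ u := by simp [varSet]

theorem forall_mem_indexSet {W : Finset (Fin N)} {P : ℕ → Prop} :
    (∀ x ∈ indexSet W, P x) ↔ ∀ i ∈ W, P (i + 1) := by
  simp [indexSet]

theorem indexSet_varSet (hu : u ⊆ Finset.Icc 1 N) : indexSet (varSet N u) = u := by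
  refine Finset.Subset.antisymm (forall_mem_indexSet.2 fun i hi => mem_varSet.1 hi) fun x hx => ?_
  obtain ⟨h1, hN⟩ := Finset.mem_Icc.1 (hu hx)
  refine Finset.mem_map.2 ⟨⟨x - 1, by omega⟩, mem_varSet.2 ?_, ?_⟩
  · rwa [Nat.sub_add_cancel h1]
  · exact Nat.sub_add_cancel h1

theorem indexSet_union (V W : Finset (Fin N)) :
    indexSet (V ∪ W) = indexSet V ∪ indexSet W :=
  Finset.map_union ..

theorem varSet_subset_iff (hu : u ⊆ Finset.Icc 1 N) {W : Finset (Fin N)} :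
    varSet N u ⊆ W ↔ u ⊆ indexSet W := by
  conv_rhs => rw [← indexSet_varSet hu]
  exact Finset.map_subset_map.symm

theorem varSet_union (u v : Finset ℕ) : varSet N (u ∪ v) = varSet N u ∪ varSet N v := by
  ext i
  simp only [mem_varSet, Finset.mem_union]

theorem disjoint_varSet (h : Disjoint u v) : Disjoint (varSet N u) (varSet N v) :=
  Finset.disjoint_left.2 fun _ hu hv =>
    Finset.disjoint_left.1 h (mem_varSet.1 hu) (mem_varSet.1 hv)

section Ideals

variable {k : Type*} [CommSemiring k] {𝒮 𝒯 : Finset (Finset ℕ)}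

/-- The monomial `∏ t ∈ u, x_t` of `k[x_1, …, x_N]`. -/
noncomputable def sqfreeMonomial (k : Type*) [CommSemiring k] (N : ℕ) (u : Finset ℕ) :
    MvPolynomial (Fin N) k :=
  ∏ i ∈ varSet N u, X i

/-- The ideal of `k[x_1, …, x_N]` generated by the monomials `∏ t ∈ u, x_t` with `u ∈ 𝒮`. -/
noncomputable def oneIndexedIdeal (k : Type*) [CommSemiring k] (N : ℕ)
    (𝒮 : Finset (Finset ℕ)) : Ideal (MvPolynomial (Fin N) k) :=
  sqfreeIdeal k (varSet N '' 𝒮)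

theorem sqfreeMonomial_union (h : Disjoint u v) :
    sqfreeMonomial k N (u ∪ v) = sqfreeMonomial k N u * sqfreeMonomial k N v := by
  rw [sqfreeMonomial, varSet_union, Finset.prod_union (disjoint_varSet h), sqfreeMonomial,
    sqfreeMonomial]

theorem sqfreeMonomial_mem_oneIndexedIdeal (hu : u ∈ 𝒮) :
    sqfreeMonomial k N u ∈ oneIndexedIdeal k N 𝒮 :=
  prod_X_mem_sqfreeIdeal ⟨u, hu, rfl⟩

theorem oneIndexedIdeal_le_iff {I : Ideal (MvPolynomial (Fin N) k)} :
    oneIndexedIdeal k N 𝒮 ≤ I ↔ ∀ u ∈ 𝒮, sqfreeMonomial k N u ∈ I := by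
  rw [oneIndexedIdeal, sqfreeIdeal, Ideal.span_le, Set.image_image, Set.image_subset_iff]
  rfl

theorem oneIndexedIdeal_union (𝒮 𝒯 : Finset (Finset ℕ)) :
    oneIndexedIdeal k N (𝒮 ∪ 𝒯) = oneIndexedIdeal k N 𝒮 ⊔ oneIndexedIdeal k N 𝒯 := by
  rw [oneIndexedIdeal, Finset.coe_union, Set.image_union, sqfreeIdeal_union, oneIndexedIdeal,
    oneIndexedIdeal]

theorem mem_oneIndexedIdeal (h𝒮 : ∀ u ∈ 𝒮, u ⊆ Finset.Icc 1 N) {f : MvPolynomial (Fin N) k} :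
    f ∈ oneIndexedIdeal k N 𝒮 ↔ ∀ e ∈ f.support, ∃ u ∈ 𝒮, u ⊆ indexSet e.support := by
  simp_rw [oneIndexedIdeal, mem_sqfreeIdeal, Set.exists_mem_image, Finset.mem_coe]
  exact forall₂_congr fun e _ => exists_congr fun u => and_congr_right fun hu =>
    varSet_subset_iff (h𝒮 u hu)

theorem sqfreeMonomial_mul_mem_oneIndexedIdeal (h𝒮 : ∀ u ∈ 𝒮, u ⊆ Finset.Icc 1 N)
    (hw : w ⊆ Finset.Icc 1 N) {f : MvPolynomial (Fin N) k} :
    sqfreeMonomial k N w * f ∈ oneIndexedIdeal k N 𝒮 ↔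
      ∀ e ∈ f.support, ∃ u ∈ 𝒮, u ⊆ indexSet e.support ∪ w := by
  simp_rw [oneIndexedIdeal, sqfreeMonomial, prod_X_mul_mem_sqfreeIdeal, Set.exists_mem_image,
    Finset.mem_coe]
  refine forall₂_congr fun e _ => exists_congr fun u => and_congr_right fun hu => ?_
  rw [varSet_subset_iff (h𝒮 u hu), indexSet_union, indexSet_varSet hw]

theorem mem_oneIndexedIdeal_of_sqfreeMonomial_mul_mem (h : ∀ u ∈ 𝒮, Disjoint u w)
    {f : MvPolynomial (Fin N) k} (hf : sqfreeMonomial k N w * f ∈ oneIndexedIdeal k N 𝒮) :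
    f ∈ oneIndexedIdeal k N 𝒮 := by
  refine mem_sqfreeIdeal_of_prod_X_mul_mem ?_ hf
  rintro _ ⟨u, hu, rfl⟩
  exact disjoint_varSet (h u hu)

end Ideals

section Facets

variable {n p r : ℕ} {P : Finset ℕ} {W : Finset (Fin N)}

variable (N) in
/-- The face of the simplex on `x_1, …, x_N` in which only the variables indexed by
`[p, r + 1] \ paired P` are omitted. -/
def pairFacet (p r : ℕ) (P : Finset ℕ) : Finset (Fin N) :=
  {i | p ≤ (i : ℕ) + 1 → (i : ℕ) + 1 ≤ r + 1 → (i : ℕ) + 1 ∈ paired P}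

theorem varSet_subset_pairFacet (h : u ⊆ paired P) : varSet N u ⊆ pairFacet N p r P := by
  intro i hi
  rw [pairFacet, Finset.mem_filter_univ]
  exact fun _ _ => h (mem_varSet.1 hi)

theorem isPairCover_indexSet_iff :
    IsPairCover n p r (indexSet W) P ↔ P ∈ sparseSets n p r ∧ W ⊆ pairFacet N p r P := by
  simp only [IsPairCover, forall_mem_indexSet, Finset.subset_iff, pairFacet,
    Finset.mem_filter_univ]

theorem isLinkedFacetFamily_pairFacet (hp : 1 ≤ p) (hr : r + 1 ≤ N) (hn : p + 2 * n ≤ r + 1) :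
    IsLinkedFacetFamily (varSet N '' sparseSets (n + 1) p (r + 1))
      (varSet N '' sparseSets n (p + 1) r) (sparseSets n p r) (pairFacet N p r) where
  exists_subset_iff W := by
    have hcover := exists_isPairCover_iff (W := indexSet W) (hn.trans (Nat.le_succ _))
    simp_rw [isPairCover_indexSet_iff] at hcover
    rw [Set.exists_mem_image, ← not_iff_not]
    push Not
    rw [hcover]
    exact forall₂_congr fun u hu =>
      not_congr (varSet_subset_iff (subset_Icc_of_mem_sparseSets hp hr hu))
  exists_subset_facet P hP := by
    obtain ⟨Q, hQ, hQP, -⟩ := exists_subset_paired_shift hn hP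
    exact ⟨_, ⟨Q, hQ, rfl⟩, varSet_subset_pairFacet hQP⟩
  reflTransGen_facetLink W P hP hWP Q hQ hWQ := by
    refine Relation.ReflTransGen.mono ?_ _ _ (IsPairCover.reflTransGen
      (isPairCover_indexSet_iff.2 ⟨hP, hWP⟩) (isPairCover_indexSet_iff.2 ⟨hQ, hWQ⟩))
    rintro P Q ⟨hP, hQ, u, hu, huP, huQ⟩
    exact ⟨isPairCover_indexSet_iff.1 hP, isPairCover_indexSet_iff.1 hQ, _, ⟨u, hu, rfl⟩,
      varSet_subset_pairFacet huP, varSet_subset_pairFacet huQ⟩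

end Facets

end OneIndexed

section SparseIdeals

variable {N : ℕ}

/-- The ideal `I_{n,p,q}` of `k[x_1, …, x_N]`. Unlike `idealI`, it is the unit ideal for `n = 0`
whatever `p` and `q` are. -/
noncomputable abbrev sparseIdeal (k : Type*) [CommSemiring k] (N n p q : ℕ) :
    Ideal (MvPolynomial (Fin N) k) :=
  oneIndexedIdeal k N (sparseSets n p q)

variable {k : Type*} {n p q b M : ℕ} {w : Finset ℕ}

theorem mem_sparseIdeal [CommSemiring k] (hp : 1 ≤ p) (hq : q ≤ N) {f : MvPolynomial (Fin N) k} :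
    f ∈ sparseIdeal k N n p q ↔
      ∀ e ∈ f.support, ∃ u ∈ sparseSets n p q, u ⊆ indexSet e.support :=
  mem_oneIndexedIdeal fun _ => subset_Icc_of_mem_sparseSets hp hq

theorem sparseIdeal_le_sparseIdeal [CommSemiring k] {n' p' q' : ℕ}
    (h : ∀ u ∈ sparseSets n p q, ∃ v ∈ sparseSets n' p' q', v ⊆ u) :
    sparseIdeal k N n p q ≤ sparseIdeal k N n' p' q' := by
  rw [oneIndexedIdeal_le_iff]
  intro u hu
  obtain ⟨v, hv, hvu⟩ := h u hu
  rw [← Finset.union_sdiff_of_subset hvu, sqfreeMonomial_union Finset.disjoint_sdiff]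
  exact Ideal.mul_mem_right _ _ (sqfreeMonomial_mem_oneIndexedIdeal hv)

theorem sparseIdeal_eq_sup_span_mul [CommSemiring k] (hp : 1 ≤ p) (hpM : p ≤ M)
    (hM : M + 2 ≤ N) :
    sparseIdeal k N (b + 2) p (M + 2) =
      sparseIdeal k N (b + 2) p (M + 1) ⊔ sparseIdeal k N (b + 2) (p + 1) (M + 2) ⊔
        Ideal.span {sqfreeMonomial k N {p, M + 2}} * sparseIdeal k N b (p + 2) M := by
  refine le_antisymm (oneIndexedIdeal_le_iff.2 fun u hu => ?_) (sup_le (sup_le ?_ ?_) ?_)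
  · by_cases hpu : p ∈ u
    · by_cases hMu : M + 2 ∈ u
      · obtain ⟨v, hv, rfl⟩ := exists_eq_insert_insert_of_mem_sparseSets hu hpu hMu (by omega)
        have hdisj : Disjoint {p, M + 2} v := by
          have := (mem_sparseSets.1 hv).2.1
          grind [Finset.disjoint_left]
        have hunion : insert p (insert (M + 2) v) = {p, M + 2} ∪ v := by
          rw [Finset.insert_union, Finset.singleton_union]
        rw [hunion, sqfreeMonomial_union hdisj]
        exact Ideal.mem_sup_right (Ideal.mul_mem_mul (Ideal.mem_span_singleton_self _)
          (sqfreeMonomial_mem_oneIndexedIdeal hv))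
      · exact Ideal.mem_sup_left <| Ideal.mem_sup_left <| sqfreeMonomial_mem_oneIndexedIdeal <|
          mem_sparseSets_of_last_notMem hu hMu
    · exact Ideal.mem_sup_left <| Ideal.mem_sup_right <| sqfreeMonomial_mem_oneIndexedIdeal <|
        mem_sparseSets_of_first_notMem hu hpu
  · exact sparseIdeal_le_sparseIdeal fun u hu =>
      ⟨u, sparseSets_mono le_rfl (by omega) hu, subset_rfl⟩
  · exact sparseIdeal_le_sparseIdeal fun u hu =>
      ⟨u, sparseSets_mono (by omega) le_rfl hu, subset_rfl⟩
  · rw [Ideal.span_singleton_mul_le_iff]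
    intro f hf
    rw [mem_sparseIdeal (by omega) (by omega)] at hf
    rw [sqfreeMonomial_mul_mem_oneIndexedIdeal (fun _ => subset_Icc_of_mem_sparseSets hp hM)
      (by grind)]
    intro e he
    obtain ⟨v, hv, hve⟩ := hf e he
    refine ⟨insert p (insert (M + 2) v), insert_mem_sparseSets
      (insert_last_mem_sparseSets hv (by omega)) le_rfl (by omega), ?_⟩
    grind

theorem sqfreeMonomial_mul_mem_sup [CommSemiring k] (hp : 1 ≤ p) (hpM : p + 2 * b + 1 ≤ M)
    (hM : M + 2 ≤ N) {f : MvPolynomial (Fin N) k}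
    (hfA : f ∈ sparseIdeal k N (b + 1) (p + 1) (M + 1))
    (hfB : f ∈ sparseIdeal k N b (p + 2) M) :
    sqfreeMonomial k N {p, M + 2} * f ∈
      sparseIdeal k N (b + 2) p (M + 1) ⊔ sparseIdeal k N (b + 2) (p + 1) (M + 2) := by
  rw [mem_sparseIdeal (by omega) (by omega)] at hfA hfB
  rw [← oneIndexedIdeal_union, sqfreeMonomial_mul_mem_oneIndexedIdeal ?_ (by grind)]
  · intro e he
    obtain ⟨u, hu, hue⟩ := hfA e he
    obtain ⟨v, hv, hve⟩ := hfB e he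
    rcases exists_subset_mem_sparseSets_or (by omega) hu hue hv hve with
      ⟨w, hw, hwe⟩ | ⟨w, hw, hwe⟩
    · refine ⟨insert p w, Finset.mem_union_left _
        (insert_mem_sparseSets hw le_rfl (by omega)), ?_⟩
      grind
    · refine ⟨insert (M + 2) w, Finset.mem_union_right _
        (insert_last_mem_sparseSets hw (by omega)), ?_⟩
      grind
  · intro u hu
    rcases Finset.mem_union.1 hu with hu | hu
    · exact subset_Icc_of_mem_sparseSets hp (by omega) hu
    · exact subset_Icc_of_mem_sparseSets (by omega) hM hu

theorem hasBijectiveHomothety_sparseIdeal [CommRing k] [IsDomain k] [UniqueFactorizationMonoid k]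
    {r : ℕ} (hp : 1 ≤ p) (hr : r + 1 ≤ N) (hn : p + 2 * n ≤ r + 1) :
    HasBijectiveHomothety (sparseIdeal k N (n + 1) p (r + 1)) (sparseIdeal k N n (p + 1) r) :=
  (isLinkedFacetFamily_pairFacet hp hr hn).hasBijectiveHomothety
    ((sparseSets n (p + 1) r).finite_toSet.image _)

theorem isUnprojectionDatum_sparseIdeal [CommRing k] [IsDomain k] [UniqueFactorizationMonoid k]
    (hp : 1 ≤ p) (hpM : p + 2 * b + 1 ≤ M) (hM : M + 2 ≤ N)
    (hw : Disjoint (Finset.Icc p (M + 2)) w) {I : Ideal (MvPolynomial (Fin N) k)}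
    (hI : I = sparseIdeal k N (b + 2) p (M + 1) ⊔ sparseIdeal k N (b + 2) (p + 1) (M + 2)) :
    IsUnprojectionDatum
      ((sparseIdeal k N (b + 1) (p + 1) (M + 1)).map (Ideal.Quotient.mk I))
      ((sparseIdeal k N b (p + 2) M).map (Ideal.Quotient.mk I))
      (Ideal.Quotient.mk I (sqfreeMonomial k N {p, M + 2}))
      (Ideal.Quotient.mk I (sqfreeMonomial k N w)) := by
  refine isUnprojectionDatum_map_quotient_mk ?_ ?_ ?_ ?_ ?_ ?_ ?_
  · rw [hI]
    refine sup_le (sparseIdeal_le_sparseIdeal fun u hu => ?_)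
      (sparseIdeal_le_sparseIdeal fun u hu => ?_)
    · obtain ⟨v, hv, hvu⟩ := exists_subset_mem_sparseSets_add_two_left hu
      exact ⟨v, sparseSets_mono (by omega) le_rfl hv, hvu⟩
    · obtain ⟨v, hv, hvu⟩ := exists_subset_mem_sparseSets_sub_two_right hu
      exact ⟨v, sparseSets_mono le_rfl (by omega) hv, hvu⟩
  · exact fun f hf => hI ▸ sqfreeMonomial_mul_mem_sup hp hpM hM hf.1 hf.2
  · refine fun f hf => mem_oneIndexedIdeal_of_sqfreeMonomial_mul_mem (fun u hu => ?_) hf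
    exact Finset.disjoint_of_subset_left (subset_Icc_of_mem_sparseSets le_rfl le_rfl hu)
      (by simp)
  · refine fun f hf => mem_oneIndexedIdeal_of_sqfreeMonomial_mul_mem (fun u hu => ?_) hf
    exact Finset.disjoint_of_subset_left
      (subset_Icc_of_mem_sparseSets (by omega) (by omega) hu) hw
  · rw [hI, ← oneIndexedIdeal_union]
    refine fun f hf => mem_oneIndexedIdeal_of_sqfreeMonomial_mul_mem (fun u hu => ?_) hf
    refine Finset.disjoint_of_subset_left ?_ hw
    rcases Finset.mem_union.1 hu with hu | hu
    · exact subset_Icc_of_mem_sparseSets le_rfl (by omega) hu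
    · exact subset_Icc_of_mem_sparseSets (by omega) le_rfl hu
  · rw [hI, ← sparseIdeal_eq_sup_span_mul hp (by omega) hM]
    exact hasBijectiveHomothety_sparseIdeal hp hM (by omega)
  · exact hasBijectiveHomothety_sparseIdeal (by omega) (by omega) (by omega)

end SparseIdeals

section IdealI

open Finset

variable {n p q : ℕ}

theorem image_range_mem_sparseSets {t : ℕ → ℕ} (h₀ : p ≤ t 0)
    (h : ∀ j < n, t j + 2 ≤ t (j + 1)) :
    (range (n + 1)).image t ∈ sparseSets (n + 1) p (t n) := by
  induction n with
  | zero => exact singleton_mem_sparseSets h₀ le_rfl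
  | succ n ih =>
    have hmem := ih fun j hj => h j (by omega)
    have hp : p ≤ t n :=
      ((mem_sparseSets.1 hmem).2.1 (t n) (mem_image_of_mem t (self_mem_range_succ n))).1
    have hstep := h n n.lt_succ_self
    obtain ⟨q, hq⟩ : ∃ q, t (n + 1) = q + 2 := ⟨t (n + 1) - 2, by omega⟩
    rw [range_add_one, image_insert, hq]
    exact insert_last_mem_sparseSets (sparseSets_mono le_rfl (by omega) hmem) (by omega)

theorem exists_eq_image_range_of_mem_sparseSets {u : Finset ℕ}
    (hu : u ∈ sparseSets (n + 1) p q) :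
    ∃ t : ℕ → ℕ, p ≤ t 0 ∧ t n ≤ q ∧ (∀ j < n, t j + 2 ≤ t (j + 1)) ∧
      (range (n + 1)).image t = u := by
  induction n generalizing p u with
  | zero =>
    obtain ⟨x, v, rfl, hpx, hxq, hv⟩ := exists_eq_insert_of_mem_sparseSets hu
    refine ⟨fun _ => x, hpx, hxq, by simp, ?_⟩
    rw [eq_empty_of_mem_sparseSets_zero hv]
    rfl
  | succ n ih =>
    obtain ⟨x, v, rfl, hpx, -, hv⟩ := exists_eq_insert_of_mem_sparseSets hu
    obtain ⟨t, hxt, htq, ht, rfl⟩ := ih hv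
    refine ⟨fun j => Nat.casesOn j x t, hpx, htq, fun j hj => ?_, ?_⟩
    · rcases j with _ | j
      · exact hxt
      · exact ht j (by omega)
    · rw [range_add_one', image_insert, map_eq_image, image_image]
      rfl

variable (k : Type*) [Field k] {N : ℕ}

theorem Xv_succ (i : Fin N) : Xv k N (i + 1) = MvPolynomial.X i :=
  dif_pos ⟨by omega, by omega⟩

theorem prod_Xv_eq_sqfreeMonomial {u : Finset ℕ} (hu : u ⊆ Icc 1 N) :
    ∏ x ∈ u, Xv k N x = sqfreeMonomial k N u := by
  conv_lhs => rw [← indexSet_varSet hu]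
  rw [indexSet, prod_map, sqfreeMonomial]
  exact prod_congr rfl fun i _ => Xv_succ k i

theorem Xv_eq_sqfreeMonomial_singleton {t : ℕ} (ht : 1 ≤ t) (htN : t ≤ N) :
    Xv k N t = sqfreeMonomial k N {t} := by
  rw [← prod_Xv_eq_sqfreeMonomial k (by grind), prod_singleton]

theorem prod_Xv_eq_sqfreeMonomial_image {t : ℕ → ℕ} (hp : 1 ≤ p) (hq : q ≤ N) (h₀ : p ≤ t 0)
    (hn : t n ≤ q) (h : ∀ j < n, t j + 2 ≤ t (j + 1)) :
    ∏ j ∈ range (n + 1), Xv k N (t j) = sqfreeMonomial k N ((range (n + 1)).image t) := by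
  have hmem := image_range_mem_sparseSets h₀ h
  have hinj : Set.InjOn t (range (n + 1)) :=
    card_image_iff.1 ((mem_sparseSets.1 hmem).1.trans (card_range _).symm)
  rw [← prod_Xv_eq_sqfreeMonomial k (subset_Icc_of_mem_sparseSets hp (hn.trans hq) hmem),
    prod_image hinj]

theorem idealI_eq_sparseIdeal (hn : 1 ≤ n) (hp : 1 ≤ p) (hq : q ≤ N) :
    idealI k N n p q = sparseIdeal k N n p q := by
  obtain ⟨n, rfl⟩ := Nat.exists_eq_add_of_le' hn
  refine le_antisymm (Ideal.span_le.2 ?_) (oneIndexedIdeal_le_iff.2 fun u hu => ?_)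
  · rintro _ ⟨t, h₀, hn : t n ≤ q, h, rfl⟩
    have h (j) (hj : j < n) : t j + 2 ≤ t (j + 1) := h j (Nat.succ_lt_succ hj)
    refine prod_Xv_eq_sqfreeMonomial_image k hp hq h₀ hn h ▸
      sqfreeMonomial_mem_oneIndexedIdeal
        (sparseSets_mono le_rfl hn (image_range_mem_sparseSets h₀ h))
  · obtain ⟨t, h₀, hn, h, rfl⟩ := exists_eq_image_range_of_mem_sparseSets hu
    refine Ideal.subset_span ⟨t, h₀, hn, fun j hj => h j (Nat.lt_of_succ_lt_succ hj), ?_⟩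
    exact (prod_Xv_eq_sqfreeMonomial_image k hp hq h₀ hn h).symm

end IdealI

theorem hom_module_exact_sequence_even_general {k : Type*} [CommRing k] [IsDomain k]
    [UniqueFactorizationMonoid k] {N p b M : ℕ} {w : Finset ℕ} (hp : 1 ≤ p)
    (hpM : p + 2 * b + 1 ≤ M) (hM : M + 2 ≤ N) (hw : Disjoint (Finset.Icc p (M + 2)) w)
    {I J : Ideal (MvPolynomial (Fin N) k)}
    (hI : I = sparseIdeal k N (b + 2) p (M + 1) + sparseIdeal k N (b + 2) (p + 1) (M + 2))
    (hJ : J = sparseIdeal k N (b + 1) (p + 1) (M + 1) +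
      Ideal.span {sqfreeMonomial k N w} * sparseIdeal k N b (p + 2) M)
    {Jbar : Ideal (MvPolynomial (Fin N) k ⧸ I)} (hJbar : Jbar = J.map (Ideal.Quotient.mk I))
    {Θ : (MvPolynomial (Fin N) k ⧸ I) →ₗ[MvPolynomial (Fin N) k ⧸ I]
      (Jbar →ₗ[MvPolynomial (Fin N) k ⧸ I] MvPolynomial (Fin N) k ⧸ I)}
    (hΘ : ∀ (r : MvPolynomial (Fin N) k ⧸ I) (u : Jbar), Θ r u = r * u) :
    Function.Injective Θ ∧
    Nonempty (((Jbar →ₗ[MvPolynomial (Fin N) k ⧸ I] MvPolynomial (Fin N) k ⧸ I) ⧸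
        LinearMap.range Θ)
      ≃ₗ[MvPolynomial (Fin N) k ⧸ I] ((MvPolynomial (Fin N) k ⧸ I) ⧸ Jbar)) := by
  have h := isUnprojectionDatum_sparseIdeal hp hpM hM hw hI
  obtain rfl : Jbar = unprojectionIdeal _ _ _ := by
    rw [hJbar, hJ, Ideal.add_eq_sup, Ideal.map_sup, Ideal.map_mul, Ideal.map_span,
      Set.image_singleton]
  obtain rfl : Θ = LinearMap.toSpanSingleton _ _ (Submodule.subtype _) :=
    LinearMap.ext fun r => LinearMap.ext (hΘ r)
  exact ⟨h.toSpanSingleton_subtype_injective, h.nonempty_quotient_range_equiv⟩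

/-- For `d ≥ 4` even, `d + 1 < m`, `a = (d+2)/2`: with `R = k[x_1,…,x_m,z]` (`z` the last
variable), `I = I_{a,1,m−1} + I_{a,2,m}`, `J = I_{a−1,2,m−1} + z·I_{a−2,3,m−2}`, and `J̄`
the image of `J` in `R/I`, the `R/I`-linear map `Θ : R/I → Hom_{R/I}(J̄, R/I)` sending `r`
to multiplication by `r` is injective, and its cokernel is isomorphic as an `R/I`-module to
`R/J` (realized as `(R/I)/J̄`). -/
theorem hom_module_exact_sequence_even (k : Type*) [Field k] (d m : ℕ)
    (hd : Even d) (hd4 : 4 ≤ d) (hm : d + 1 < m) (a : ℕ) (ha : a = (d + 2) / 2)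
    (I J : Ideal (MvPolynomial (Fin (m + 1)) k))
    (hI : I = idealI k (m + 1) a 1 (m - 1) + idealI k (m + 1) a 2 m)
    (hJ : J = idealI k (m + 1) (a - 1) 2 (m - 1) +
      Ideal.span {Xv k (m + 1) (m + 1)} * idealI k (m + 1) (a - 2) 3 (m - 2))
    (Jbar : Ideal (MvPolynomial (Fin (m + 1)) k ⧸ I))
    (hJbar : Jbar = J.map (Ideal.Quotient.mk I))
    (Θ : (MvPolynomial (Fin (m + 1)) k ⧸ I) →ₗ[MvPolynomial (Fin (m + 1)) k ⧸ I]
      (Jbar →ₗ[MvPolynomial (Fin (m + 1)) k ⧸ I] MvPolynomial (Fin (m + 1)) k ⧸ I))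
    (hΘ : ∀ (r : MvPolynomial (Fin (m + 1)) k ⧸ I) (u : Jbar),
      Θ r u = r * (u : MvPolynomial (Fin (m + 1)) k ⧸ I)) :
    Function.Injective Θ ∧
    Nonempty (((Jbar →ₗ[MvPolynomial (Fin (m + 1)) k ⧸ I]
        MvPolynomial (Fin (m + 1)) k ⧸ I) ⧸ LinearMap.range Θ)
      ≃ₗ[MvPolynomial (Fin (m + 1)) k ⧸ I]
        ((MvPolynomial (Fin (m + 1)) k ⧸ I) ⧸ Jbar)) := by
  obtain ⟨b, M, rfl, rfl, hb, hbM⟩ :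
      ∃ b M, a = b + 2 ∧ m = M + 2 ∧ 1 ≤ b ∧ 1 + 2 * b + 1 ≤ M :=
    ⟨a - 2, m - 2, by omega, by omega, by omega, by grind⟩
  rw [idealI_eq_sparseIdeal k (by omega) (by omega) (by omega),
    idealI_eq_sparseIdeal k (by omega) (by omega) (by omega)] at hI hJ
  rw [Xv_eq_sqfreeMonomial_singleton k (by omega) le_rfl] at hJ
  exact hom_module_exact_sequence_even_general le_rfl hbM (by omega) (by simp) hI hJ hJbar hΘ
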